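/- Let A ≥ 0 and B > 0 be constants, r > 0, and let f : B_r → ℝ be a smooth nonnegative function on the open disk B_r ⊂ ℝ² of radius r centered at 0, satisfying Δf ≥ −A − B·f² pointwise (Δ the standard Laplacian). If ∫_{B_r} f ≤ π/(16B), then f(0) ≤ (8/(π r²))·∫_{B_r} f + A·r²/4. -/

import Mathlib

/-!
The proof is E. Heinz's trick for the differential inequality `Δf ≥ -A - B f²`.

If `Δw ≥ -C` on the disk of radius `s` about `z`, then
`π s² w(z) ≤ ∫ w + π C s⁴ / 8` (`mean_value_ineq`): in polar coordinates the circle integral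
`φ(t)` satisfies `(t φ'(t))' ≥ -2πCt`, because the angular part of the Laplacian integrates to
zero, and integrating three times gives the inequality.

To get a constant `C` from the quadratic term, maximize `(R - |p|)² f(p)` over the closed disk of
radius `R < r`. Let `z` be a maximum point; if `|z| = R`, then `f(0) = 0`. Otherwise, with
`c = f(z)` and `d = (R - |z|) / 2`, one has `f ≤ 4c` on the disk of radius `d` about
`z`, hence `Δf ≥ -A - 16 B c²` there, and it is enough to bound
`4 d² c ≥ R² f(0)`. If `4 B c d² ≤ 1`, the mean value inequality on the disk of radius `d`
absorbs the quadratic term. Otherwise, on the smaller disk of radius `s` with `s² = 1 / (4 B c)`,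
the bound on the energy forces `16 B c² ≤ 2A`; thus `Δf ≥ -3A` and the mean value inequality on
the disk of radius `d` applies once more (`heinz_core`). Letting `R → r` finishes the proof.

The argument takes place on `ℂ`, where Mathlib's polar coordinates are convenient, and is carried
over to `EuclideanSpace ℝ (Fin 2)` by the standard isometry.
-/

open MeasureTheory

/-- The Laplacian of a function on the Euclidean plane, computed via second derivatives
within a set: `Δf(p) = Σᵢ ∂²f/∂xᵢ²(p)`. -/
noncomputable def lapWithin (f : EuclideanSpace ℝ (Fin 2) → ℝ)
    (s : Set (EuclideanSpace ℝ (Fin 2))) (p : EuclideanSpace ℝ (Fin 2)) : ℝ :=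
  ∑ i : Fin 2, iteratedFDerivWithin ℝ 2 f s p
    ![EuclideanSpace.single i (1 : ℝ), EuclideanSpace.single i (1 : ℝ)]

open Set Metric Complex Function

/-! ### Circle integrals and the mean value inequality -/

/-- Differentiation under the integral sign over a compact interval; the derivative is dominated
locally by compactness. -/
theorem hasDerivAt_intervalIntegral_of_continuous {K K' : ℝ → ℝ → ℝ}
    (hK : Continuous (uncurry K)) (hK' : Continuous (uncurry K'))
    (h : ∀ t θ, HasDerivAt (fun t => K t θ) (K' t θ) t) (a b t : ℝ) :
    HasDerivAt (fun t => ∫ θ in a..b, K t θ) (∫ θ in a..b, K' t θ) t := by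
  obtain ⟨M, hM⟩ := ((isCompact_closedBall t 1).prod
    (isCompact_uIcc (a := a) (b := b))).exists_bound_of_continuousOn hK'.continuousOn
  have hKt : ∀ t, Continuous (K t) := fun t => by fun_prop
  have hKt' : ∀ t, Continuous (K' t) := fun t => by fun_prop
  refine (intervalIntegral.hasDerivAt_integral_of_dominated_loc_of_deriv_le
    (bound := fun _ => M) (s := ball t 1) (ball_mem_nhds t one_pos)
    (.of_forall fun t => (hKt t).aestronglyMeasurable) ((hKt t).intervalIntegrable _ _)
    (hKt' t).aestronglyMeasurable (.of_forall fun θ hθ x hx => ?_)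
    intervalIntegrable_const (.of_forall fun θ _ x _ => h x θ)).2
  exact hM (x, θ) ⟨ball_subset_closedBall hx, uIoc_subset_uIcc hθ⟩

/-- The unit vector of the plane at angle `θ`. -/
noncomputable def unitDir (θ : ℝ) : ℂ := Real.cos θ • (1 : ℂ) + Real.sin θ • I

/-- The unit vector at angle `θ + π / 2`, i.e. the derivative of `unitDir`. -/
noncomputable def unitDirPerp (θ : ℝ) : ℂ := -Real.sin θ • (1 : ℂ) + Real.cos θ • I

@[fun_prop]
theorem continuous_unitDir : Continuous unitDir := by unfold unitDir; fun_prop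

@[fun_prop]
theorem continuous_unitDirPerp : Continuous unitDirPerp := by unfold unitDirPerp; fun_prop

theorem hasDerivAt_unitDir (θ : ℝ) : HasDerivAt unitDir (unitDirPerp θ) θ :=
  ((Real.hasDerivAt_cos θ).smul_const _).add ((Real.hasDerivAt_sin θ).smul_const _)

theorem hasDerivAt_unitDirPerp (θ : ℝ) : HasDerivAt unitDirPerp (-unitDir θ) θ := by
  convert! ((Real.hasDerivAt_sin θ).neg.smul_const (1 : ℂ)).add
    ((Real.hasDerivAt_cos θ).smul_const I) using 1
  simp [unitDir]; ring

theorem norm_unitDir (θ : ℝ) : ‖unitDir θ‖ = 1 := by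
  simp [unitDir, ← Complex.exp_mul_I, Complex.norm_exp_ofReal_mul_I]

/-- The Laplacian of a function on `ℂ`, as the trace of the second Fréchet derivative in the
basis `1, I`. -/
noncomputable def lapC (w : ℂ → ℝ) (p : ℂ) : ℝ :=
  fderiv ℝ (fderiv ℝ w) p 1 1 + fderiv ℝ (fderiv ℝ w) p I I

/-- The trace defining the Laplacian may be computed in the rotated orthonormal basis. -/
theorem lapC_eq_unitDir {w : ℂ → ℝ} (p : ℂ) (θ : ℝ) :
    lapC w p = fderiv ℝ (fderiv ℝ w) p (unitDir θ) (unitDir θ)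
      + fderiv ℝ (fderiv ℝ w) p (unitDirPerp θ) (unitDirPerp θ) := by
  simp only [lapC, unitDir, unitDirPerp, map_add, map_smul, add_apply,
    smul_apply, smul_eq_mul]
  linear_combination (-(fderiv ℝ (fderiv ℝ w) p 1 1 + fderiv ℝ (fderiv ℝ w) p I I))
    * Real.sin_sq_add_cos_sq θ

theorem hasFDerivAt_of_contDiff_two {w : ℂ → ℝ} (hw : ContDiff ℝ 2 w) (p : ℂ) :
    HasFDerivAt w (fderiv ℝ w p) p :=
  (hw.differentiable (by norm_num) p).hasFDerivAt

theorem contDiff_one_fderiv {w : ℂ → ℝ} (hw : ContDiff ℝ 2 w) :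
    ContDiff ℝ 1 (fderiv ℝ w) := hw.fderiv_right (by norm_num)

theorem hasFDerivAt_fderiv_of_contDiff_two {w : ℂ → ℝ} (hw : ContDiff ℝ 2 w) (p : ℂ) :
    HasFDerivAt (fderiv ℝ w) (fderiv ℝ (fderiv ℝ w) p) p :=
  ((contDiff_one_fderiv hw).differentiable (by norm_num) p).hasFDerivAt

theorem continuous_fderiv_fderiv {w : ℂ → ℝ} (hw : ContDiff ℝ 2 w) :
    Continuous (fderiv ℝ (fderiv ℝ w)) :=
  (contDiff_one_fderiv hw).continuous_fderiv (by norm_num)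

theorem hasDerivAt_ray (z : ℂ) (t θ : ℝ) :
    HasDerivAt (fun t : ℝ => z + t • unitDir θ) (unitDir θ) t := by
  simpa using ((hasDerivAt_id t).smul_const (unitDir θ)).const_add z

theorem continuous_lapC {w : ℂ → ℝ} (hw : ContDiff ℝ 2 w) : Continuous (lapC w) := by
  have c2 := continuous_fderiv_fderiv hw
  unfold lapC
  fun_prop

theorem hasDerivAt_along_ray {w : ℂ → ℝ} (hw : ContDiff ℝ 2 w) (z : ℂ) (t θ : ℝ) : HasDerivAt (fun t : ℝ => w (z + t • unitDir θ))
    (fderiv ℝ w (z + t • unitDir θ) (unitDir θ)) t :=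
  (hasFDerivAt_of_contDiff_two hw _).comp_hasDerivAt t (hasDerivAt_ray z t θ)

theorem hasDerivAt_fderiv_along_ray {w : ℂ → ℝ} (hw : ContDiff ℝ 2 w) (z : ℂ) (t θ : ℝ) :
    HasDerivAt (fun t : ℝ => fderiv ℝ w (z + t • unitDir θ) (unitDir θ))
    (fderiv ℝ (fderiv ℝ w) (z + t • unitDir θ) (unitDir θ) (unitDir θ)) t := by
  have := ((hasFDerivAt_fderiv_of_contDiff_two hw _).comp_hasDerivAt t
    (hasDerivAt_ray z t θ)).clm_apply
    (hasDerivAt_const t (unitDir θ))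
  simpa using this

/-- The function differentiated here is `∂/∂θ` of `w (z + t • unitDir θ)`, so the result is the
second angular derivative of `w`. -/
theorem hasDerivAt_angle {w : ℂ → ℝ} (hw : ContDiff ℝ 2 w) (z : ℂ) (t θ : ℝ) :
    HasDerivAt (fun θ : ℝ => t * fderiv ℝ w (z + t • unitDir θ) (unitDirPerp θ))
    (t ^ 2 * fderiv ℝ (fderiv ℝ w) (z + t • unitDir θ) (unitDirPerp θ) (unitDirPerp θ)
      - t * fderiv ℝ w (z + t • unitDir θ) (unitDir θ)) θ := by
  have h1 : HasDerivAt (fun θ : ℝ => z + t • unitDir θ) (t • unitDirPerp θ) θ :=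
    ((hasDerivAt_unitDir θ).const_smul t).const_add z
  have := (((hasFDerivAt_fderiv_of_contDiff_two hw _).comp_hasDerivAt θ h1).clm_apply
    (hasDerivAt_unitDirPerp θ)).const_mul t
  convert! this using 1
  simp only [map_smul, smul_apply, map_neg, smul_eq_mul, comp_apply]
  ring

/-- The second angular derivative integrates to zero over the circle, by periodicity. -/
theorem integral_angle_deriv_eq_zero {w : ℂ → ℝ} (hw : ContDiff ℝ 2 w) (z : ℂ) (t : ℝ) :
    ∫ θ in -Real.pi..Real.pi,
      (t ^ 2 * fderiv ℝ (fderiv ℝ w) (z + t • unitDir θ) (unitDirPerp θ) (unitDirPerp θ)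
      - t * fderiv ℝ w (z + t • unitDir θ) (unitDir θ)) = 0 := by
  have c1 := (contDiff_one_fderiv hw).continuous
  have c2 := continuous_fderiv_fderiv hw
  rw [intervalIntegral.integral_eq_sub_of_hasDerivAt
    (fun θ _ => hasDerivAt_angle hw z t θ) (Continuous.intervalIntegrable (by fun_prop) _ _)]
  simp [unitDir, unitDirPerp]

/-- A lower bound for the circle integral `φ(t)` of `w`: it satisfies `t²φ'' + tφ' = ∫ t² Δw`, so
`tφ' + πCt²` and then `φ + πCt²/2` are nondecreasing. -/
theorem circle_lower_bound {w : ℂ → ℝ} (hw : ContDiff ℝ 2 w) (z : ℂ)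
    {C s : ℝ} (hC : ∀ p ∈ ball z s, -C ≤ lapC w p) {t : ℝ}
    (ht : t ∈ Icc 0 s) :
    2 * Real.pi * w z - Real.pi * C * t ^ 2 / 2 ≤
      ∫ θ in -Real.pi..Real.pi, w (z + t • unitDir θ) := by
  have c0 := hw.continuous
  have c1 := (contDiff_one_fderiv hw).continuous
  have c2 := continuous_fderiv_fderiv hw
  have c3 := continuous_lapC hw
  set φ : ℝ → ℝ := fun t => ∫ θ in -Real.pi..Real.pi, w (z + t • unitDir θ) with hφ
  set φ₁ : ℝ → ℝ := fun t => ∫ θ in -Real.pi..Real.pi,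
    fderiv ℝ w (z + t • unitDir θ) (unitDir θ) with hφ₁
  set φ₂ : ℝ → ℝ := fun t => ∫ θ in -Real.pi..Real.pi,
    fderiv ℝ (fderiv ℝ w) (z + t • unitDir θ) (unitDir θ) (unitDir θ) with hφ₂
  have d1 : ∀ t, HasDerivAt φ (φ₁ t) t :=
    hasDerivAt_intervalIntegral_of_continuous (by unfold uncurry; fun_prop)
      (by unfold uncurry; fun_prop) (hasDerivAt_along_ray hw z) _ _
  have d2 : ∀ t, HasDerivAt φ₁ (φ₂ t) t :=
    hasDerivAt_intervalIntegral_of_continuous (by unfold uncurry; fun_prop)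
      (by unfold uncurry; fun_prop) (hasDerivAt_fderiv_along_ray hw z) _ _
  have key : ∀ t, t ∈ Ioo 0 s → -(2 * Real.pi * C * t) ≤ φ₁ t + t * φ₂ t := by
    intro t ht
    have hl : ∫ θ in -Real.pi..Real.pi, t ^ 2 * lapC w (z + t • unitDir θ)
        = t ^ 2 * φ₂ t + t * φ₁ t := by
      have h0 := integral_angle_deriv_eq_zero hw z t
      rw [← sub_zero (∫ θ in -Real.pi..Real.pi, t ^ 2 * _), ← h0, hφ₁, hφ₂]
      simp only [← intervalIntegral.integral_const_mul]
      rw [← intervalIntegral.integral_sub, ← intervalIntegral.integral_add]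
      · congr 1; ext θ; rw [lapC_eq_unitDir _ θ]; ring
      all_goals exact Continuous.intervalIntegrable (by fun_prop) _ _
    have hge : ∫ θ in -Real.pi..Real.pi, t ^ 2 * (-C) ≤
        ∫ θ in -Real.pi..Real.pi, t ^ 2 * lapC w (z + t • unitDir θ) := by
      apply intervalIntegral.integral_mono_on (by linarith [Real.pi_pos])
      · exact intervalIntegrable_const
      · exact Continuous.intervalIntegrable (by fun_prop) _ _
      · intro θ _
        gcongr
        apply hC
        rw [mem_ball_iff_norm, add_sub_cancel_left, norm_smul, norm_unitDir, mul_one,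
          Real.norm_of_nonneg ht.1.le]
        exact ht.2
    rw [hl, intervalIntegral.integral_const, smul_eq_mul] at hge
    refine le_of_mul_le_mul_left ?_ ht.1
    linarith
  have m1 : MonotoneOn (fun t => t * φ₁ t + Real.pi * C * t ^ 2) (Icc 0 s) := by
    have d : ∀ t, HasDerivAt (fun t => t * φ₁ t + Real.pi * C * t ^ 2)
        (1 * φ₁ t + t * φ₂ t + Real.pi * C * (2 * t)) t := fun t => by
      convert! ((hasDerivAt_id t).mul (d2 t)).add
        ((hasDerivAt_pow 2 t).const_mul (Real.pi * C)) using 1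
      simp
    refine monotoneOn_of_deriv_nonneg (convex_Icc 0 s)
      (fun t _ => (d t).continuousAt.continuousWithinAt)
      (fun t _ => (d t).differentiableAt.differentiableWithinAt) fun t ht => ?_
    rw [interior_Icc] at ht
    rw [(d t).deriv]
    linarith [key t ht]
  have m2 : MonotoneOn (fun t => φ t + Real.pi * C / 2 * t ^ 2) (Icc 0 s) := by
    have d : ∀ t, HasDerivAt (fun t => φ t + Real.pi * C / 2 * t ^ 2)
        (φ₁ t + Real.pi * C / 2 * (2 * t)) t := fun t => by
      convert! (d1 t).add ((hasDerivAt_pow 2 t).const_mul (Real.pi * C / 2)) using 1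
      simp
    refine monotoneOn_of_deriv_nonneg (convex_Icc 0 s)
      (fun t _ => (d t).continuousAt.continuousWithinAt)
      (fun t _ => (d t).differentiableAt.differentiableWithinAt) fun t ht => ?_
    rw [interior_Icc] at ht
    rw [(d t).deriv]
    have := m1 (left_mem_Icc.2 (ht.1.trans ht.2).le) (Ioo_subset_Icc_self ht) ht.1.le
    refine le_of_mul_le_mul_left ?_ ht.1
    simp only [zero_mul] at this
    linarith
  have := m2 (left_mem_Icc.2 (ht.1.trans ht.2)) ht ht.1
  have h0 : φ 0 = 2 * Real.pi * w z := by
    simp only [hφ, zero_smul, add_zero, intervalIntegral.integral_const, smul_eq_mul]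
    ring
  simp only [h0] at this
  linarith

theorem integral_ball_polar {w : ℂ → ℝ} (z : ℂ) (hw : Continuous w) {s : ℝ} (hs : 0 ≤ s) :
    ∫ p in ball z s, w p = ∫ t in 0..s, t * ∫ θ in -Real.pi..Real.pi, w (z + t • unitDir θ) := by
  have h1 : ∫ p in ball z s, w p = ∫ p, (ball 0 s).indicator (fun p => w (z + p)) p := by
    rw [← integral_indicator measurableSet_ball, ← integral_add_left_eq_self _ z]
    congr 1; ext p
    simp [indicator]
  have h2 : ∀ p ∈ polarCoord.target,
      p.1 • (ball (0 : ℂ) s).indicator (fun p => w (z + p)) (Complex.polarCoord.symm p)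
      = (Ioo 0 s ×ˢ Ioo (-Real.pi) Real.pi).indicator
        (fun p : ℝ × ℝ => p.1 * w (z + p.1 • unitDir p.2)) p := by
    rintro ⟨t, θ⟩ ⟨ht, hθ⟩
    simp only [mem_Ioi] at ht hθ
    have : Complex.polarCoord.symm (t, θ) = t • unitDir θ := by
      simp [unitDir, Complex.polarCoord_symm_apply, mul_add]
    simp [this, indicator, norm_unitDir, abs_of_pos ht, ht, hθ.1, hθ.2]
  rw [h1, ← Complex.integral_comp_polarCoord_symm, setIntegral_congr_fun
    polarCoord.open_target.measurableSet h2, setIntegral_indicator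
      (measurableSet_Ioo.prod measurableSet_Ioo), inter_eq_right.2, Measure.volume_eq_prod,
    setIntegral_prod]
  · rw [intervalIntegral.integral_of_le hs, integral_Ioc_eq_integral_Ioo]
    congr 1; ext t
    rw [integral_const_mul, intervalIntegral.integral_of_le (by linarith [Real.pi_pos]),
      integral_Ioc_eq_integral_Ioo]
  · refine IntegrableOn.mono_set (t := Icc 0 s ×ˢ Icc (-Real.pi) Real.pi) ?_
      (prod_mono Ioo_subset_Icc_self Ioo_subset_Icc_self)
    exact ContinuousOn.integrableOn_compact (isCompact_Icc.prod isCompact_Icc)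
      (Continuous.continuousOn (by fun_prop))
  · rintro ⟨t, θ⟩ ⟨ht, hθ⟩
    exact ⟨ht.1, hθ⟩

/-- The mean value inequality for a function with `Δw ≥ -C` on a disk. -/
theorem mean_value_ineq {w : ℂ → ℝ} (hw : ContDiff ℝ 2 w) (z : ℂ)
    {C s : ℝ} (hs : 0 ≤ s) (hC : ∀ p ∈ ball z s, -C ≤ lapC w p) :
    Real.pi * s ^ 2 * w z ≤ (∫ p in ball z s, w p) + Real.pi * C * s ^ 4 / 8 := by
  have c0 := hw.continuous
  have h : ∫ t in 0..s, t * (2 * Real.pi * w z - Real.pi * C * t ^ 2 / 2) ≤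
      ∫ p in ball z s, w p := by
    rw [integral_ball_polar z c0 hs]
    refine intervalIntegral.integral_mono_on hs (Continuous.intervalIntegrable (by fun_prop) _ _)
      (Continuous.intervalIntegrable ?_ _ _) fun t ht =>
        mul_le_mul_of_nonneg_left (circle_lower_bound hw z hC ht) ht.1
    refine continuous_id.mul
      (intervalIntegral.continuous_parametric_intervalIntegral_of_continuous' ?_ _ _)
    unfold uncurry; fun_prop
  have h3 : ∫ t in 0..s, t * (2 * Real.pi * w z - Real.pi * C * t ^ 2 / 2)
      = Real.pi * s ^ 2 * w z - Real.pi * C * s ^ 4 / 8 := by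
    have : ∀ t : ℝ, t * (2 * Real.pi * w z - Real.pi * C * t ^ 2 / 2) =
      (2 * Real.pi * w z) * t - (Real.pi * C / 2) * t ^ 3 := fun t => by ring
    simp only [this]
    rw [intervalIntegral.integral_sub (Continuous.intervalIntegrable (by fun_prop) _ _)
      (Continuous.intervalIntegrable (by fun_prop) _ _)]
    rw [intervalIntegral.integral_const_mul, intervalIntegral.integral_const_mul,
      integral_id, integral_pow]
    norm_num
    ring
  linarith

/-! ### Heinz's trick -/

/-- The estimate for a function that is `C²` on the whole plane. -/
theorem heinz_core {G : ℂ → ℝ} (hG : ContDiff ℝ 2 G) {A B R : ℝ} (hA : 0 ≤ A) (hB : 0 < B)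
    (hR : 0 < R) (hnn : ∀ p ∈ ball (0 : ℂ) R, 0 ≤ G p)
    (hineq : ∀ p ∈ ball (0 : ℂ) R, -A - B * G p ^ 2 ≤ lapC G p)
    (hsmall : ∫ p in ball (0 : ℂ) R, G p ≤ Real.pi / (16 * B)) :
    R ^ 2 * G 0 ≤ 8 / Real.pi * (∫ p in ball (0 : ℂ) R, G p) + A * R ^ 4 / 4 := by
  have hpi := Real.pi_pos
  set E := ∫ p in ball (0 : ℂ) R, G p with hE
  have hE0 : 0 ≤ E := setIntegral_nonneg measurableSet_ball hnn
  obtain ⟨z, hzR, hz⟩ := (isCompact_closedBall (0 : ℂ) R).exists_isMaxOn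
    (nonempty_closedBall.2 hR.le) (f := fun p => (R - ‖p‖) ^ 2 * G p)
    (by have := hG.continuous; exact Continuous.continuousOn (by fun_prop))
  have hmax : ∀ p ∈ ball (0 : ℂ) R, (R - ‖p‖) ^ 2 * G p ≤ (R - ‖z‖) ^ 2 * G z :=
    fun p hp => hz (ball_subset_closedBall hp)
  have h0 := hmax 0 (mem_ball_self hR)
  rw [norm_zero, sub_zero] at h0
  rw [mem_closedBall_zero_iff] at hzR
  obtain hzR | hzR := hzR.eq_or_lt
  · rw [hzR, sub_self] at h0
    have : 0 ≤ 8 / Real.pi * E + A * R ^ 4 / 4 := by positivity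
    linarith
  obtain ⟨d, hd⟩ : ∃ d, d = (R - ‖z‖) / 2 := ⟨_, rfl⟩
  have hd0 : 0 < d := by linarith
  have hdR : d ≤ R / 2 := by linarith [norm_nonneg z]
  have hsub : ball z d ⊆ ball 0 R := ball_subset_ball' (by rw [dist_zero_right]; linarith)
  set c := G z with hc
  have hRd : R - ‖z‖ = 2 * d := by linarith
  rw [hRd] at h0 hmax
  have hc0 : 0 ≤ c := hnn z (mem_ball_zero_iff.2 hzR)
  have h4c : ∀ p ∈ ball z d, G p ≤ 4 * c := by
    intro p hp
    have h1 : ‖p‖ ≤ ‖z‖ + d := by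
      have := norm_le_norm_add_norm_sub' p z
      rw [mem_ball_iff_norm] at hp
      linarith
    have h2 : d ^ 2 * G p ≤ (R - ‖p‖) ^ 2 * G p := by
      gcongr
      · exact hnn p (hsub hp)
      · linarith
    have h3 := hmax p (hsub hp)
    refine le_of_mul_le_mul_left ?_ (pow_pos hd0 2)
    linarith
  have mv : ∀ s, 0 ≤ s → s ≤ d → ∀ C, A + 16 * B * c ^ 2 ≤ C →
      Real.pi * s ^ 2 * c ≤ E + Real.pi * C * s ^ 4 / 8 := by
    intro s hs hsd C hC
    have hsb : ball z s ⊆ ball z d := ball_subset_ball hsd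
    have h1 := mean_value_ineq hG z (C := C) hs fun p hp => by
      have hpR := hsub (hsb hp)
      have h2 : G p ^ 2 ≤ (4 * c) ^ 2 := pow_le_pow_left₀ (hnn p hpR) (h4c p (hsb hp)) 2
      have h3 := mul_le_mul_of_nonneg_left h2 hB.le
      linarith [hineq p hpR]
    have h2 : ∫ p in ball z s, G p ≤ E := by
      refine setIntegral_mono_set ?_ ?_ (hsb.trans hsub).eventuallyLE
      · exact (hG.continuous.continuousOn.integrableOn_compact
          (isCompact_closedBall (0 : ℂ) R)).mono_set ball_subset_closedBall
      · exact (ae_restrict_iff' measurableSet_ball).2 (.of_forall hnn)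
    linarith
  have hd4 : A * d ^ 4 ≤ A * R ^ 4 / 16 := by
    have : d ^ 4 ≤ (R / 2) ^ 4 := pow_le_pow_left₀ hd0.le hdR 4
    have := mul_le_mul_of_nonneg_left this hA
    linarith
  have hAR : 0 ≤ A * R ^ 4 := by positivity
  -- Since `R² G 0 ≤ 4 d² c` and `d ≤ R / 2`, the term `3 A d⁴` below is at most `3 A R⁴ / 16`.
  suffices h : Real.pi * d ^ 2 * c / 2 ≤ E + Real.pi * (A * d ^ 4) * (3 / 8) by
    have h5 : 4 * d ^ 2 * c ≤ 8 / Real.pi * E + 3 * (A * d ^ 4) := by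
      have : 8 / Real.pi * (Real.pi * d ^ 2 * c / 2) ≤
        8 / Real.pi * (E + Real.pi * (A * d ^ 4) * (3 / 8)) := by gcongr
      field_simp at this ⊢
      linarith
    linarith
  have hAd : 0 ≤ Real.pi * (A * d ^ 4) := by positivity
  have hcd : 0 ≤ Real.pi * d ^ 2 * c := by positivity
  -- The threshold on `d` is the radius at which the quadratic term is exactly absorbed in `c / 2`.
  by_cases hcase : 4 * B * c * d ^ 2 ≤ 1
  · have h1 := mv d hd0.le le_rfl _ le_rfl
    have h2 : Real.pi * (c * d ^ 2) / 2 * (4 * B * c * d ^ 2) ≤ Real.pi * (c * d ^ 2) / 2 * 1 := by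
      gcongr
    linarith
  · push Not at hcase
    have hcpos : 0 < c := by
      refine hc0.lt_of_ne fun h => ?_
      rw [← h] at hcase
      norm_num at hcase
    obtain ⟨q, hq⟩ : ∃ q, q = 1 / (4 * B * c) := ⟨_, rfl⟩
    have hq0 : 0 < q := by rw [hq]; positivity
    have hBcq : B * c * q = 1 / 4 := by rw [hq]; field_simp
    have hqd : q ≤ d ^ 2 := by
      rw [hq, div_le_iff₀ (by positivity)]
      linarith
    have h1 := mv (√q) (Real.sqrt_nonneg q) (Real.sqrt_le_left hd0.le |>.2 hqd) _ le_rfl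
    have e4 : √q ^ 4 = q ^ 2 := by
      rw [show (4 : ℕ) = 2 * 2 from rfl, pow_mul, Real.sq_sqrt hq0.le]
    rw [e4, Real.sq_sqrt hq0.le] at h1
    -- At radius `√q` the quadratic term takes half, and the energy a quarter, of the left side,
    -- so the term with `A` has to account for the remaining quarter.
    have h2 : 1 ≤ 2 * A * B * q ^ 2 := by
      have h3 := mul_le_mul_of_nonneg_left (h1.trans (add_le_add_left hsmall _))
        (show 0 ≤ 16 * B / Real.pi by positivity)
      have h4 : 16 * B / Real.pi * (Real.pi / (16 * B) + Real.pi * (A + 16 * B * c ^ 2) * q ^ 2 / 8)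
        = 1 + 2 * A * B * q ^ 2 + 32 * (B * c * q) ^ 2 := by field_simp; ring
      have h5 : 16 * B / Real.pi * (Real.pi * q * c) = 16 * (B * c * q) := by field_simp
      rw [h4, h5, hBcq] at h3
      linarith
    have h3 : 16 * B * c ^ 2 ≤ 2 * A := by
      have := mul_le_mul_of_nonneg_left h2 (show 0 ≤ 16 * B * c ^ 2 by positivity)
      have h4 : 16 * B * c ^ 2 * (2 * A * B * q ^ 2) = 32 * A * (B * c * q) ^ 2 := by ring
      rw [h4, hBcq] at this
      linarith
    have h4 := mv d hd0.le le_rfl (3 * A) (by linarith)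
    linarith

/-- Multiplication by a bump function extends `F` from a smaller disk to the whole plane. -/
theorem exists_global_eqOn {F : ℂ → ℝ} {r R : ℝ} (hR : 0 < R) (hRr : R < r)
    (hF : ContDiffOn ℝ 2 F (ball 0 r)) : ∃ G : ℂ → ℝ, ContDiff ℝ 2 G ∧ EqOn G F (ball 0 R) := by
  let χ : ContDiffBump (0 : ℂ) := ⟨R, (R + r) / 2, hR, by linarith⟩
  refine ⟨fun p => χ p * F p, contDiff_iff_contDiffAt.2 fun p => ?_, fun p hp => ?_⟩
  · by_cases hp : p ∈ ball (0 : ℂ) r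
    · exact χ.contDiff.contDiffAt.mul (hF.contDiffAt (isOpen_ball.mem_nhds hp))
    · have : p ∉ tsupport χ := by
        rw [χ.tsupport_eq]
        intro h
        rw [mem_closedBall_zero_iff] at h
        rw [mem_ball_zero_iff] at hp
        have : ‖p‖ ≤ (R + r) / 2 := h
        linarith
      refine (contDiffAt_const (c := (0 : ℝ))).congr_of_eventuallyEq ?_
      filter_upwards [notMem_tsupport_iff_eventuallyEq.1 this] with q hq
      simp [hq]
  · simp [χ.one_of_mem_closedBall (ball_subset_closedBall hp)]

/-- The estimate for a function that is `C²` on the open disk only, by exhaustion with smaller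
disks. -/
theorem heinz_disk {F : ℂ → ℝ} {A B r : ℝ} (hF : ContDiffOn ℝ 2 F (ball 0 r))
    (hA : 0 ≤ A) (hB : 0 < B)
    (hr : 0 < r) (hnn : ∀ p ∈ ball (0 : ℂ) r, 0 ≤ F p)
    (hineq : ∀ p ∈ ball (0 : ℂ) r, -A - B * F p ^ 2 ≤ lapC F p)
    (hint : IntegrableOn F (ball 0 r))
    (hsmall : ∫ p in ball (0 : ℂ) r, F p ≤ Real.pi / (16 * B)) :
    r ^ 2 * F 0 ≤ 8 / Real.pi * (∫ p in ball (0 : ℂ) r, F p) + A * r ^ 4 / 4 := by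
  have main : ∀ R ∈ Ioo 0 r,
      R ^ 2 * F 0 ≤ 8 / Real.pi * (∫ p in ball (0 : ℂ) r, F p) + A * R ^ 4 / 4 := by
    intro R hR
    have hsub : ball (0 : ℂ) R ⊆ ball 0 r := ball_subset_ball hR.2.le
    obtain ⟨G, hG, hGF⟩ := exists_global_eqOn hR.1 hR.2 hF
    have hle : ∫ p in ball (0 : ℂ) R, G p ≤ ∫ p in ball (0 : ℂ) r, F p := by
      rw [setIntegral_congr_fun measurableSet_ball hGF]
      exact setIntegral_mono_set hint ((ae_restrict_iff' measurableSet_ball).2 (.of_forall hnn))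
        hsub.eventuallyLE
    have h := heinz_core hG hA hB hR.1 (fun p hp => hGF hp ▸ hnn p (hsub hp)) (fun p hp => by
      have : G =ᶠ[nhds p] F := hGF.eventuallyEq_of_mem (isOpen_ball.mem_nhds hp)
      rw [hGF hp, lapC, this.fderiv.fderiv_eq]
      exact hineq p (hsub hp)) (hle.trans hsmall)
    rw [hGF (mem_ball_self hR.1)] at h
    refine h.trans ?_
    gcongr
  have hcl : r ∈ closure (Ioo 0 r) := by
    rw [closure_Ioo hr.ne]; exact right_mem_Icc.2 hr.le
  refine closure_minimal main (isClosed_le (f := fun R : ℝ => R ^ 2 * F 0) (g := fun R : ℝ =>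
    8 / Real.pi * (∫ p in ball (0 : ℂ) r, F p) + A * R ^ 4 / 4) ?_ ?_) hcl <;> fun_prop

/-! ### Transfer to the Euclidean plane -/

/-- The Laplacian on `ℂ` corresponds to `lapWithin` under the standard isometry
`ℂ ≃ EuclideanSpace ℝ (Fin 2)`. -/
theorem lapC_comp_repr {f : EuclideanSpace ℝ (Fin 2) → ℝ} {s : Set (EuclideanSpace ℝ (Fin 2))}
    (hs : IsOpen s) (hf : ContDiffOn ℝ 2 f s) {p : ℂ}
    (hp : Complex.orthonormalBasisOneI.repr p ∈ s) :
    lapC (f ∘ Complex.orthonormalBasisOneI.repr) p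
      = lapWithin f s (Complex.orthonormalBasisOneI.repr p) := by
  set L := Complex.orthonormalBasisOneI.repr with hL
  have hL0 : L 1 = EuclideanSpace.single 0 1 := by
    ext i; fin_cases i <;> simp [hL, Complex.orthonormalBasisOneI_repr_apply]
  have hL1 : L I = EuclideanSpace.single 1 1 := by
    ext i; fin_cases i <;> simp [hL, Complex.orthonormalBasisOneI_repr_apply]
  have h1 : fderiv ℝ (f ∘ L) = fun p =>
      (fderiv ℝ f (L p)).comp (L.toContinuousLinearEquiv : ℂ →L[ℝ] EuclideanSpace ℝ (Fin 2)) := by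
    ext1 p
    exact L.toContinuousLinearEquiv.comp_right_fderiv
  have h2 : HasFDerivAt (fderiv ℝ f) (fderiv ℝ (fderiv ℝ f) (L p)) (L p) :=
    (((hf.contDiffAt (hs.mem_nhds hp)).fderiv_right (m := 1) (by norm_num)).differentiableAt
      (by norm_num)).hasFDerivAt
  have h3 := (h2.comp p L.toContinuousLinearEquiv.hasFDerivAt).clm_comp
    (hasFDerivAt_const (L.toContinuousLinearEquiv : ℂ →L[ℝ] EuclideanSpace ℝ (Fin 2)) p)
  have h4 : ∀ v, fderiv ℝ (fderiv ℝ (f ∘ L)) p v v = fderiv ℝ (fderiv ℝ f) (L p) (L v) (L v) := by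
    intro v
    rw [h1]
    -- `erw`: `h3` writes the same map as a composition.
    erw [h3.fderiv]
    simp
  rw [lapWithin, iteratedFDerivWithin_of_isOpen 2 hs hp, lapC, h4, h4, hL0, hL1]
  simp [iteratedFDeriv_two_apply]

/-- Mean value estimate for `Δf ≥ −A − B·f²` on the disk of radius `r` in the plane
(Lemma A.5 of the paper). -/
theorem stmt10 (A B r : ℝ) (hA : 0 ≤ A) (hB : 0 < B) (hr : 0 < r)
    (f : EuclideanSpace ℝ (Fin 2) → ℝ)
    (hsmooth : ContDiffOn ℝ (⊤ : ℕ∞) f (Metric.ball 0 r))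
    (hnn : ∀ p ∈ Metric.ball (0 : EuclideanSpace ℝ (Fin 2)) r, 0 ≤ f p)
    (hineq : ∀ p ∈ Metric.ball (0 : EuclideanSpace ℝ (Fin 2)) r,
      -A - B * f p ^ 2 ≤ lapWithin f (Metric.ball 0 r) p)
    (hint : IntegrableOn f (Metric.ball 0 r))
    (hsmall : (∫ p in Metric.ball (0 : EuclideanSpace ℝ (Fin 2)) r, f p) ≤ Real.pi / (16 * B)) :
    f 0 ≤ (8 / (Real.pi * r ^ 2)) * (∫ p in Metric.ball (0 : EuclideanSpace ℝ (Fin 2)) r, f p)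
      + A * r ^ 2 / 4 := by
  set L := Complex.orthonormalBasisOneI.repr with hL
  have hball : L ⁻¹' ball 0 r = ball 0 r := by
    ext p; simp
  have hmem : ∀ p ∈ ball (0 : ℂ) r, L p ∈ ball 0 r := fun p hp => by simpa using hp
  have hf2 : ContDiffOn ℝ 2 f (ball 0 r) := contDiffOn_infty.1 hsmooth 2
  have hmp : MeasurePreserving L := L.measurePreserving
  have hemb : MeasurableEmbedding L := L.toMeasurableEquiv.measurableEmbedding
  have hI : ∫ p in ball (0 : ℂ) r, (f ∘ L) p = ∫ p in ball 0 r, f p := by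
    rw [← hmp.setIntegral_preimage_emb hemb, hball]; rfl
  have h := heinz_disk (F := f ∘ L) (A := A) (B := B) (r := r)
    (hf2.comp L.contDiff.contDiffOn hmem) hA hB hr (fun p hp => hnn _ (hmem p hp))
    (fun p hp => by
      rw [lapC_comp_repr isOpen_ball hf2 (hmem p hp)]
      exact hineq _ (hmem p hp))
    (by rw [← hball]; exact (hmp.integrableOn_comp_preimage hemb).2 hint) (hI ▸ hsmall)
  rw [hI, comp_apply, map_zero] at h
  have hpi := Real.pi_pos
  refine le_of_mul_le_mul_left (h.trans_eq ?_) (pow_pos hr 2)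
  field_simp
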